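/- Let x : Ω → ℝ^p and ε : Ω → ℝ^m be square-integrable random vectors with E[x] = μ, Cov(x) = Σ, E[ε] = 0, Cov(ε) = σ²I with σ > 0, and E[(x − μ)εᵀ] = 0. Let A ∈ ℝ^{m×p}, y = Ax + ε, and fix a ∈ ℝ^p. Then the scalar affine estimator aᵀμ + aᵀΣAᵀ(AΣAᵀ + σ²I)⁻¹(y − Aμ) minimizes the mean squared error for estimating aᵀx among all scalar affine functions of y: for every w ∈ ℝ^m and β ∈ ℝ, E|aᵀμ + aᵀΣAᵀ(AΣAᵀ + σ²I)⁻¹(y − Aμ) − aᵀx|² ≤ E|β + wᵀy − aᵀx|². In particular, applying the linear functional aᵀ to the optimal affine estimator of x yields the optimal affine estimator of aᵀx. -/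

import Mathlib

open MeasureTheory ProbabilityTheory Matrix

/-!
Expected squares split as variance plus squared mean, so the constant term of an affine estimator
should make the error centered, and only the variance of `wᵀy - z` remains to be minimized over
`w`. If the gain `g` solves the normal equations `gᵀ Cov(y) = Cov(z, y)`, then the error `gᵀy - z`
is uncorrelated with every linear functional of `y`; since `wᵀy - z` is this error plus
`(w - g)ᵀy`, its variance is at least that of the error. In the linear model
`Cov(y) = A Cov(x) Aᵀ + Cov(ε)` and `Cov(aᵀx, y) = aᵀ Cov(x) Aᵀ`, which identifies the gain.
-/

section DotProduct

variable {Ω ι τ : Type*} {mΩ : MeasurableSpace Ω} {P : Measure Ω} [Fintype ι] {x : Ω → ι → ℝ}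

lemma memLp_dotProduct {q : ENNReal} (u : ι → ℝ)
    (hx : ∀ i, MemLp (fun ω ↦ x ω i) q P) : MemLp (fun ω ↦ u ⬝ᵥ x ω) q P :=
  memLp_finsetSum _ fun i _ ↦ (hx i).const_mul (u i)

lemma memLp_mulVec_apply {q : ENNReal} (A : Matrix τ ι ℝ)
    (hx : ∀ i, MemLp (fun ω ↦ x ω i) q P) (t : τ) : MemLp (fun ω ↦ (A *ᵥ x ω) t) q P :=
  memLp_dotProduct (A t) hx

lemma integrable_dotProduct (u : ι → ℝ) (hx : ∀ i, Integrable (fun ω ↦ x ω i) P) :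
    Integrable (fun ω ↦ u ⬝ᵥ x ω) P :=
  integrable_finsetSum _ fun i _ ↦ (hx i).const_mul (u i)

lemma integral_dotProduct {μ : ι → ℝ} (u : ι → ℝ)
    (hx : ∀ i, Integrable (fun ω ↦ x ω i) P) (hμ : ∀ i, ∫ ω, x ω i ∂P = μ i) :
    ∫ ω, u ⬝ᵥ x ω ∂P = u ⬝ᵥ μ := by
  simp only [dotProduct]
  rw [integral_finsetSum _ fun i _ ↦ (hx i).const_mul (u i)]
  simp only [integral_const_mul, hμ]

end DotProduct

section CrossCov

variable {Ω ι κ τ : Type*} {mΩ : MeasurableSpace Ω} {P : Measure Ω}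

/-- The cross-covariance matrix `E[(x - E[x]) (y - E[y])ᵀ]` of two random vectors, given entrywise
by Mathlib's scalar `covariance`; the covariance matrix of `x` is `crossCov P x x`. -/
noncomputable def crossCov (P : Measure Ω) (x : Ω → ι → ℝ) (y : Ω → κ → ℝ) : Matrix ι κ ℝ :=
  .of fun i j ↦ cov[fun ω ↦ x ω i, fun ω ↦ y ω j; P]

variable {x x' : Ω → ι → ℝ} {y y' : Ω → κ → ℝ}

lemma crossCov_eq_of_integral_centered_mul {μ : ι → ℝ} {ν : κ → ℝ} {S : Matrix ι κ ℝ}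
    (hμ : ∀ i, ∫ ω, x ω i ∂P = μ i) (hν : ∀ j, ∫ ω, y ω j ∂P = ν j)
    (hS : ∀ i j, ∫ ω, (x ω i - μ i) * (y ω j - ν j) ∂P = S i j) :
    crossCov P x y = S := by
  ext i j
  simp only [crossCov, of_apply, covariance, hμ, hν, hS]

lemma transpose_crossCov (x : Ω → ι → ℝ) (y : Ω → κ → ℝ) :
    (crossCov P x y)ᵀ = crossCov P y x := by
  ext i j
  exact covariance_comm _ _

variable [IsFiniteMeasure P]

lemma crossCov_add_left (hx : ∀ i, MemLp (fun ω ↦ x ω i) 2 P)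
    (hx' : ∀ i, MemLp (fun ω ↦ x' ω i) 2 P) (hy : ∀ j, MemLp (fun ω ↦ y ω j) 2 P) :
    crossCov P (fun ω ↦ x ω + x' ω) y = crossCov P x y + crossCov P x' y := by
  ext i j
  exact covariance_add_left (hx i) (hx' i) (hy j)

lemma crossCov_add_right (hx : ∀ i, MemLp (fun ω ↦ x ω i) 2 P)
    (hy : ∀ j, MemLp (fun ω ↦ y ω j) 2 P) (hy' : ∀ j, MemLp (fun ω ↦ y' ω j) 2 P) :
    crossCov P x (fun ω ↦ y ω + y' ω) = crossCov P x y + crossCov P x y' := by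
  ext i j
  exact covariance_add_right (hx i) (hy j) (hy' j)

lemma covariance_dotProduct_left [Fintype ι] {Z : Ω → ℝ} (u : ι → ℝ)
    (hx : ∀ i, MemLp (fun ω ↦ x ω i) 2 P) (hZ : MemLp Z 2 P) :
    cov[fun ω ↦ u ⬝ᵥ x ω, Z; P] = u ⬝ᵥ fun i ↦ cov[fun ω ↦ x ω i, Z; P] := by
  simp only [dotProduct]
  rw [covariance_fun_sum_left (fun i ↦ (hx i).const_mul (u i)) hZ]
  simp only [covariance_const_mul_left]

lemma covariance_dotProduct_apply [Fintype ι] (u : ι → ℝ) (hx : ∀ i, MemLp (fun ω ↦ x ω i) 2 P)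
    (hy : ∀ j, MemLp (fun ω ↦ y ω j) 2 P) (j : κ) :
    cov[fun ω ↦ u ⬝ᵥ x ω, fun ω ↦ y ω j; P] = (u ᵥ* crossCov P x y) j :=
  covariance_dotProduct_left u hx (hy j)

lemma crossCov_mulVec_left [Fintype ι] (A : Matrix τ ι ℝ) (hx : ∀ i, MemLp (fun ω ↦ x ω i) 2 P)
    (hy : ∀ j, MemLp (fun ω ↦ y ω j) 2 P) :
    crossCov P (fun ω ↦ A *ᵥ x ω) y = A * crossCov P x y := by
  ext t j
  exact covariance_dotProduct_left (A t) hx (hy j)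

lemma crossCov_mulVec_right [Fintype ι] (A : Matrix τ ι ℝ) (hx : ∀ i, MemLp (fun ω ↦ x ω i) 2 P)
    (hy : ∀ j, MemLp (fun ω ↦ y ω j) 2 P) :
    crossCov P y (fun ω ↦ A *ᵥ x ω) = crossCov P y x * Aᵀ := by
  rw [← transpose_crossCov, crossCov_mulVec_left A hx hy, transpose_mul, transpose_crossCov]

lemma posSemidef_crossCov_self [Finite ι] (hx : ∀ i, MemLp (fun ω ↦ x ω i) 2 P) :
    (crossCov P x x).PosSemidef := by
  have := Fintype.ofFinite ι
  refine .of_dotProduct_mulVec_nonneg (transpose_crossCov x x) fun u ↦ ?_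
  have hux := memLp_dotProduct u hx
  have variance_eq : Var[fun ω ↦ u ⬝ᵥ x ω; P] = u ⬝ᵥ crossCov P x x *ᵥ u := by
    rw [← covariance_self hux.aemeasurable, covariance_dotProduct_left u hx hux]
    congr 1
    ext i
    rw [covariance_comm, covariance_dotProduct_apply u hx hx, ← mulVec_transpose,
      transpose_crossCov]
  rw [star_trivial, ← variance_eq]
  exact variance_nonneg _ _

end CrossCov

section LinearModel

variable {Ω ι κ : Type*} {mΩ : MeasurableSpace Ω} {P : Measure Ω} [Fintype ι]
  {x : Ω → ι → ℝ} {ε : Ω → κ → ℝ}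

lemma memLp_mulVec_add_apply {q : ENNReal} (A : Matrix κ ι ℝ)
    (hx : ∀ i, MemLp (fun ω ↦ x ω i) q P) (hε : ∀ j, MemLp (fun ω ↦ ε ω j) q P) (j : κ) :
    MemLp (fun ω ↦ (A *ᵥ x ω + ε ω) j) q P :=
  (memLp_mulVec_apply A hx j).add (hε j)

lemma integral_mulVec_add_apply {μ : ι → ℝ} (A : Matrix κ ι ℝ)
    (hx : ∀ i, Integrable (fun ω ↦ x ω i) P) (hε : ∀ j, Integrable (fun ω ↦ ε ω j) P)
    (hμ : ∀ i, ∫ ω, x ω i ∂P = μ i) (hε0 : ∀ j, ∫ ω, ε ω j ∂P = 0) (j : κ) :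
    ∫ ω, (A *ᵥ x ω + ε ω) j ∂P = (A *ᵥ μ) j := by
  simp only [Pi.add_apply, mulVec]
  rw [integral_add (integrable_dotProduct (A j) hx) (hε j), integral_dotProduct (A j) hx hμ, hε0,
    add_zero]

lemma crossCov_mulVec_add_of_crossCov_eq_zero [IsFiniteMeasure P] (A : Matrix κ ι ℝ)
    (hx : ∀ i, MemLp (fun ω ↦ x ω i) 2 P) (hε : ∀ j, MemLp (fun ω ↦ ε ω j) 2 P)
    (hxε : crossCov P x ε = 0) :
    crossCov P x (fun ω ↦ A *ᵥ x ω + ε ω) = crossCov P x x * Aᵀ := by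
  rw [crossCov_add_right hx (memLp_mulVec_apply A hx) hε,
    crossCov_mulVec_right A hx hx, hxε, add_zero]

lemma crossCov_self_mulVec_add_of_crossCov_eq_zero [IsFiniteMeasure P] (A : Matrix κ ι ℝ)
    (hx : ∀ i, MemLp (fun ω ↦ x ω i) 2 P) (hε : ∀ j, MemLp (fun ω ↦ ε ω j) 2 P)
    (hxε : crossCov P x ε = 0) :
    crossCov P (fun ω ↦ A *ᵥ x ω + ε ω) (fun ω ↦ A *ᵥ x ω + ε ω) =
      A * crossCov P x x * Aᵀ + crossCov P ε ε := by
  have hAx := memLp_mulVec_apply A hx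
  have hεx : crossCov P ε x = 0 := by rw [← transpose_crossCov, hxε, transpose_zero]
  rw [crossCov_add_left hAx hε (memLp_mulVec_add_apply A hx hε),
    crossCov_mulVec_left A hx (memLp_mulVec_add_apply A hx hε),
    crossCov_mulVec_add_of_crossCov_eq_zero A hx hε hxε, crossCov_add_right hε hAx hε,
    crossCov_mulVec_right A hx hε, hεx, Matrix.zero_mul, zero_add, Matrix.mul_assoc]

lemma isUnit_det_mul_mul_transpose_add [Fintype κ] [DecidableEq κ] {S : Matrix ι ι ℝ}
    {R : Matrix κ κ ℝ} (hS : S.PosSemidef) (hR : R.PosDef) (A : Matrix κ ι ℝ) :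
    IsUnit (A * S * Aᵀ + R).det :=
  (isUnit_iff_isUnit_det _).1 (PosDef.posSemidef_add (hS.mul_mul_conjTranspose_same A) hR).isUnit

end LinearModel

section AffineEstimation

variable {Ω κ : Type*} {mΩ : MeasurableSpace Ω} {P : Measure Ω}

lemma variance_le_variance_add_of_covariance_eq_zero [IsFiniteMeasure P] {X Y : Ω → ℝ}
    (hX : MemLp X 2 P) (hY : MemLp Y 2 P) (hXY : cov[X, Y; P] = 0) :
    Var[X; P] ≤ Var[X + Y; P] := by
  rw [variance_add hX hY, hXY, mul_zero, add_zero]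
  exact le_add_of_nonneg_right (variance_nonneg Y P)

variable [Fintype κ] {y : Ω → κ → ℝ} {z : Ω → ℝ} {g : κ → ℝ}

lemma covariance_dotProduct_sub_eq_zero_of_vecMul_crossCov [IsFiniteMeasure P]
    (hy : ∀ j, MemLp (fun ω ↦ y ω j) 2 P) (hz : MemLp z 2 P)
    (hg : g ᵥ* crossCov P y y = fun j ↦ cov[z, fun ω ↦ y ω j; P]) (d : κ → ℝ) :
    cov[fun ω ↦ g ⬝ᵥ y ω - z ω, fun ω ↦ d ⬝ᵥ y ω; P] = 0 := by
  have hgy := memLp_dotProduct g hy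
  have hres : MemLp (fun ω ↦ g ⬝ᵥ y ω - z ω) 2 P := hgy.sub hz
  have coordinate_uncorrelated (j : κ) :
      cov[fun ω ↦ y ω j, fun ω ↦ g ⬝ᵥ y ω - z ω; P] = 0 := by
    rw [covariance_comm, covariance_fun_sub_left hgy hz (hy j),
      covariance_dotProduct_apply g hy hy, hg, sub_self]
  rw [covariance_comm, covariance_dotProduct_left d hy hres]
  simp only [coordinate_uncorrelated]
  exact dotProduct_zero d

lemma variance_dotProduct_sub_le_of_vecMul_crossCov [IsFiniteMeasure P]
    (hy : ∀ j, MemLp (fun ω ↦ y ω j) 2 P) (hz : MemLp z 2 P)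
    (hg : g ᵥ* crossCov P y y = fun j ↦ cov[z, fun ω ↦ y ω j; P]) (w : κ → ℝ) :
    Var[fun ω ↦ g ⬝ᵥ y ω - z ω; P] ≤ Var[fun ω ↦ w ⬝ᵥ y ω - z ω; P] := by
  have decomposition : (fun ω ↦ w ⬝ᵥ y ω - z ω) =
      (fun ω ↦ g ⬝ᵥ y ω - z ω) + fun ω ↦ (w - g) ⬝ᵥ y ω := by
    ext ω
    simp only [Pi.add_apply, sub_dotProduct]
    ring
  rw [decomposition]
  exact variance_le_variance_add_of_covariance_eq_zero ((memLp_dotProduct g hy).sub hz)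
    (memLp_dotProduct (w - g) hy)
    (covariance_dotProduct_sub_eq_zero_of_vecMul_crossCov hy hz hg (w - g))

lemma integral_sq_centered_dotProduct_sub_eq_variance {ν : κ → ℝ} {c : ℝ} (g : κ → ℝ)
    (hy : ∀ j, Integrable (fun ω ↦ y ω j) P) (hz : Integrable z P)
    (hν : ∀ j, ∫ ω, y ω j ∂P = ν j) (hc : ∫ ω, z ω ∂P = c) :
    ∫ ω, (c + g ⬝ᵥ (y ω - ν) - z ω) ^ 2 ∂P = Var[fun ω ↦ g ⬝ᵥ y ω - z ω; P] := by
  have hgy := integrable_dotProduct g hy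
  have hres : Integrable (fun ω ↦ g ⬝ᵥ y ω - z ω) P := hgy.sub hz
  have integral_residual : ∫ ω, (g ⬝ᵥ y ω - z ω) ∂P = g ⬝ᵥ ν - c := by
    rw [integral_sub hgy hz, integral_dotProduct g hy hν, hc]
  rw [variance_eq_integral hres.aemeasurable, integral_residual]
  congr 1
  ext ω
  rw [dotProduct_sub]
  ring

theorem integral_sq_affine_le_of_vecMul_crossCov [IsProbabilityMeasure P] {ν : κ → ℝ} {c : ℝ}
    (hy : ∀ j, MemLp (fun ω ↦ y ω j) 2 P) (hz : MemLp z 2 P)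
    (hν : ∀ j, ∫ ω, y ω j ∂P = ν j) (hc : ∫ ω, z ω ∂P = c)
    (hg : g ᵥ* crossCov P y y = fun j ↦ cov[z, fun ω ↦ y ω j; P]) (w : κ → ℝ) (β : ℝ) :
    ∫ ω, (c + g ⬝ᵥ (y ω - ν) - z ω) ^ 2 ∂P ≤ ∫ ω, (β + w ⬝ᵥ y ω - z ω) ^ 2 ∂P := by
  have hwyz : AEStronglyMeasurable (fun ω ↦ w ⬝ᵥ y ω - z ω) P :=
    ((memLp_dotProduct w hy).sub hz).aestronglyMeasurable
  calc ∫ ω, (c + g ⬝ᵥ (y ω - ν) - z ω) ^ 2 ∂P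
      = Var[fun ω ↦ g ⬝ᵥ y ω - z ω; P] :=
        integral_sq_centered_dotProduct_sub_eq_variance g (fun j ↦ (hy j).integrable one_le_two)
          (hz.integrable one_le_two) hν hc
    _ ≤ Var[fun ω ↦ w ⬝ᵥ y ω - z ω; P] := variance_dotProduct_sub_le_of_vecMul_crossCov hy hz hg w
    _ = Var[fun ω ↦ β + (w ⬝ᵥ y ω - z ω); P] := (variance_const_add hwyz β).symm
    _ ≤ ∫ ω, (β + (w ⬝ᵥ y ω - z ω)) ^ 2 ∂P :=
        variance_le_expectation_sq (aestronglyMeasurable_const.add hwyz)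
    _ = ∫ ω, (β + w ⬝ᵥ y ω - z ω) ^ 2 ∂P := by simp only [add_sub_assoc]

end AffineEstimation

theorem linear_functional_of_cwf_is_lmmse_general
    {Ω ι κ : Type*} {mΩ : MeasurableSpace Ω} {P : Measure Ω} [IsProbabilityMeasure P]
    [Fintype ι] [Fintype κ] [DecidableEq κ] {x : Ω → ι → ℝ} {ε : Ω → κ → ℝ}
    {μ : ι → ℝ} {S : Matrix ι ι ℝ} {R : Matrix κ κ ℝ} {A : Matrix κ ι ℝ} (a : ι → ℝ)
    (hK : IsUnit (A * S * Aᵀ + R).det)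
    (hx2 : ∀ i, MemLp (fun ω ↦ x ω i) 2 P) (hε2 : ∀ j, MemLp (fun ω ↦ ε ω j) 2 P)
    (hμ : ∀ i, ∫ ω, x ω i ∂P = μ i)
    (hS : ∀ i j, ∫ ω, (x ω i - μ i) * (x ω j - μ j) ∂P = S i j)
    (hεmean : ∀ j, ∫ ω, ε ω j ∂P = 0)
    (hεcov : ∀ i j, ∫ ω, ε ω i * ε ω j ∂P = R i j)
    (hcross : ∀ i j, ∫ ω, (x ω i - μ i) * ε ω j ∂P = 0)
    {y : Ω → κ → ℝ} (hy : ∀ ω, y ω = A *ᵥ x ω + ε ω) (w : κ → ℝ) (β : ℝ) :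
    ∫ ω, (a ⬝ᵥ μ + a ⬝ᵥ ((S * Aᵀ) *ᵥ ((A * S * Aᵀ + R)⁻¹ *ᵥ (y ω - A *ᵥ μ))) - a ⬝ᵥ x ω) ^ 2 ∂P
      ≤ ∫ ω, (β + w ⬝ᵥ y ω - a ⬝ᵥ x ω) ^ 2 ∂P := by
  obtain rfl : y = fun ω ↦ A *ᵥ x ω + ε ω := funext hy
  have hxx : crossCov P x x = S := crossCov_eq_of_integral_centered_mul hμ hμ hS
  have hεε : crossCov P ε ε = R :=
    crossCov_eq_of_integral_centered_mul hεmean hεmean (by simpa only [sub_zero] using hεcov)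
  have hxε : crossCov P x ε = 0 :=
    crossCov_eq_of_integral_centered_mul hμ hεmean (by simpa using hcross)
  have hy2 := memLp_mulVec_add_apply A hx2 hε2
  have hx1 (i : ι) : Integrable (fun ω ↦ x ω i) P := (hx2 i).integrable one_le_two
  have hε1 (j : κ) : Integrable (fun ω ↦ ε ω j) P := (hε2 j).integrable one_le_two
  simp only [dotProduct_mulVec a, dotProduct_mulVec (a ᵥ* (S * Aᵀ))]
  refine integral_sq_affine_le_of_vecMul_crossCov hy2 (memLp_dotProduct a hx2)
    (integral_mulVec_add_apply A hx1 hε1 hμ hεmean) (integral_dotProduct a hx1 hμ) ?_ w β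
  ext j
  rw [covariance_dotProduct_apply a hx2 hy2,
    crossCov_mulVec_add_of_crossCov_eq_zero A hx2 hε2 hxε,
    crossCov_self_mulVec_add_of_crossCov_eq_zero A hx2 hε2 hxε, hxx, hεε, vecMul_vecMul,
    nonsing_inv_mul _ hK, vecMul_one]

/-- Under the linear model `y = Ax + ε` as in Statement 5, for a fixed
`a ∈ ℝ^p`, the scalar affine estimator `aᵀμ + aᵀSAᵀ(ASAᵀ + σ²I)⁻¹(y − Aμ)` minimizes the
mean squared error for estimating `aᵀx` among all scalar affine functions `β + wᵀy` of `y`. -/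
theorem linear_functional_of_cwf_is_lmmse
    {Ω : Type*} [MeasureSpace Ω] [IsProbabilityMeasure (ℙ : Measure Ω)]
    {p m : ℕ} (x : Ω → Fin p → ℝ) (ε : Ω → Fin m → ℝ)
    (μ : Fin p → ℝ) (S : Matrix (Fin p) (Fin p) ℝ) (σ : ℝ) (hσ : 0 < σ)
    (A : Matrix (Fin m) (Fin p) ℝ) (a : Fin p → ℝ)
    (hx2 : ∀ i, MemLp (fun ω => x ω i) 2 ℙ)
    (hε2 : ∀ i, MemLp (fun ω => ε ω i) 2 ℙ)
    (hμ : ∀ i, ∫ ω, x ω i = μ i)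
    (hS : ∀ i j, ∫ ω, (x ω i - μ i) * (x ω j - μ j) = S i j)
    (hεmean : ∀ i, ∫ ω, ε ω i = 0)
    (hεcov : ∀ i j, ∫ ω, ε ω i * ε ω j = (σ ^ 2 • (1 : Matrix (Fin m) (Fin m) ℝ)) i j)
    (hcross : ∀ i j, ∫ ω, (x ω i - μ i) * ε ω j = 0)
    (y : Ω → Fin m → ℝ) (hy : ∀ ω, y ω = A *ᵥ x ω + ε ω) :
    ∀ (w : Fin m → ℝ) (β : ℝ),
      (∫ ω, (a ⬝ᵥ μ +
          a ⬝ᵥ ((S * Aᵀ) *ᵥ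
              ((A * S * Aᵀ + σ ^ 2 • (1 : Matrix (Fin m) (Fin m) ℝ))⁻¹ *ᵥ
                (y ω - A *ᵥ μ)))
          - a ⬝ᵥ x ω) ^ 2)
        ≤ ∫ ω, (β + w ⬝ᵥ y ω - a ⬝ᵥ x ω) ^ 2 := by
  have hSpos : S.PosSemidef :=
    crossCov_eq_of_integral_centered_mul hμ hμ hS ▸ posSemidef_crossCov_self hx2
  exact linear_functional_of_cwf_is_lmmse_general a
    (isUnit_det_mul_mul_transpose_add hSpos (PosDef.one.smul (pow_pos hσ 2)) A)
    hx2 hε2 hμ hS hεmean hεcov hcross hy
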